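/- The space (ℝ², d*) is externally convex: for all x, y ∈ ℝ² with x ≠ y there exists a point z ∈ ℝ² with z ≠ y such that d*(x,y) + d*(y,z) = d*(x,z). -/

import Mathlib

/-- The river metric on ℝ². -/
noncomputable def riverDist (u v : ℝ × ℝ) : ℝ :=
  if u.1 = v.1 then |u.2 - v.2| else |u.2| + |v.2| + |u.1 - v.1|

/-- The metric segment between two points of ℝ² with the river metric. -/
def riverSegment (u v : ℝ × ℝ) : Set (ℝ × ℝ) :=
  {z | riverDist u z + riverDist z v = riverDist u v}

/-- A set is convex (w.r.t. the river metric) if it contains all metric segments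
between its points. -/
def IsRiverConvex (K : Set (ℝ × ℝ)) : Prop :=
  ∀ u ∈ K, ∀ v ∈ K, riverSegment u v ⊆ K

/-- `m` is a midpoint of `u` and `v` for the river metric. -/
def IsRiverMidpoint (u v m : ℝ × ℝ) : Prop :=
  riverDist u m = riverDist u v / 2 ∧ riverDist m v = riverDist u v / 2

/-! Every path from a point `x` to a vertical line enters the line at the same point: `x` itself if
`x` lies on the line, and the point where the line crosses the river otherwise. Along the line,
the distance from `x` is therefore a constant plus the distance from this entry point, and a segment
from `x` to `y` is extended by moving on from `y` vertically, away from the entry point. -/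

theorem exists_ne_dist_add_dist_eq {V P : Type*} [SeminormedAddCommGroup V] [NormedSpace ℝ V]
    [PseudoMetricSpace P] [NormedAddTorsor V P] [Nontrivial P] (x y : P) :
    ∃ z, z ≠ y ∧ dist x y + dist y z = dist x z := by
  rcases eq_or_ne x y with rfl | hxy
  · obtain ⟨z, hz⟩ := exists_ne x
    exact ⟨z, hz, by rw [dist_self, zero_add]⟩
  · exact ⟨AffineEquiv.pointReflection ℝ y x,
      fun hyx => hxy ((AffineEquiv.pointReflection ℝ y).injective
        (hyx.trans (AffineEquiv.pointReflection_self ℝ y).symm)),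
      (wbtw_pointReflection ℝ y x).dist_add_dist⟩

theorem riverDist_of_fst_eq {u v : ℝ × ℝ} (h : u.1 = v.1) : riverDist u v = dist u.2 v.2 := by
  rw [riverDist, if_pos h, Real.dist_eq]

theorem riverDist_of_fst_ne {u v : ℝ × ℝ} (h : u.1 ≠ v.1) :
    riverDist u v = |u.2| + |v.2| + |u.1 - v.1| :=
  if_neg h

theorem exists_riverDist_eq_add_dist (x : ℝ × ℝ) (c : ℝ) :
    ∃ k h : ℝ, ∀ t, riverDist x (c, t) = k + dist h t := by
  by_cases hc : x.1 = c
  · exact ⟨0, x.2, fun t => by rw [riverDist_of_fst_eq hc, zero_add]⟩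
  · refine ⟨|x.2| + |x.1 - c|, 0, fun t => ?_⟩
    rw [riverDist_of_fst_ne hc, dist_zero_left, Real.norm_eq_abs, add_right_comm]

/-- (ℝ², d*) is externally convex. -/
theorem river_externally_convex :
    ∀ x y : ℝ × ℝ, x ≠ y → ∃ z : ℝ × ℝ, z ≠ y ∧
      riverDist x y + riverDist y z = riverDist x z := by
  rintro x ⟨c, b⟩ -
  obtain ⟨k, h, h_dist⟩ := exists_riverDist_eq_add_dist x c
  obtain ⟨t, htb, h_add⟩ := exists_ne_dist_add_dist_eq h b
  refine ⟨(c, t), fun heq => htb (congrArg Prod.snd heq), ?_⟩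
  have h_vertical : riverDist (c, b) (c, t) = dist b t := riverDist_of_fst_eq rfl
  calc riverDist x (c, b) + riverDist (c, b) (c, t)
      = k + dist h b + dist b t := by rw [h_dist, h_vertical]
    _ = k + dist h t := by rw [add_assoc, h_add]
    _ = riverDist x (c, t) := (h_dist t).symm
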